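/- arXiv:2310.07785 — 2 statements merged into one kernel-verified Lean document; each statement's English description precedes it below -/
import Mathlib

section
/- Let q : Y → X be a continuous, open, surjective map of topological spaces and let g : A → X be a continuous map. Form the pullback P = {p : Y × A // q p.1 = g p.2} with the subspace topology, and let pr : P → Y be the first projection. If pr is an open map, then g is an open map. (Topological analogue of Proposition: open maps of locales descend along effective descent morphisms.) -/
/-- Topological analogue of "open maps descend along effective descent morphisms",
for open-surjection covers: if `q : Y → X` is a continuous open surjection,
`g : A → X` is continuous, and the pullback projection `pr : P → Y` is an open map,
then `g` is an open map. -/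
theorem open_descends_along_open_surjection
    {X Y A : Type*} [TopologicalSpace X] [TopologicalSpace Y] [TopologicalSpace A]
    (q : Y → X) (hq_cont : Continuous q) (hq_open : IsOpenMap q)
    (hq_surj : Function.Surjective q)
    (g : A → X) (hg_cont : Continuous g)
    (pr : {p : Y × A // q p.1 = g p.2} → Y)
    (hpr : pr = fun p => p.val.1)
    (h : IsOpenMap pr) : IsOpenMap g := by
  subst hpr
  intro U hU
  have h1 := hq_open _ (h _ (hU.preimage (continuous_snd.comp continuous_subtype_val)))
  convert h1 using 1
  ext x
  constructor
  · rintro ⟨a, ha, rfl⟩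
    obtain ⟨y, hy⟩ := hq_surj (g a)
    exact ⟨y, ⟨⟨(y, a), hy⟩, ha, rfl⟩, hy⟩
  · rintro ⟨_, ⟨p, hp, rfl⟩, rfl⟩
    exact ⟨p.val.2, hp, p.property.symm⟩
end

section
/- Let f : Y ⟶ X be a morphism in the category TopCat of topological spaces such that the underlying function of f is surjective and f is an open map. Then f is an effective descent morphism: the pullback functor Over.pullback f : Over X ⥤ Over Y is monadic. (This is the fact, used throughout the paper, that open surjections are effective descent morphisms; here in its topological form.) -/
open CategoryTheory CategoryTheory.Limits

namespace OpenSurjDescent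

universe u

/-- Two points of the pullback with the same projections are equal. -/
lemma pb_ext {A B X : TopCat.{u}} {p : A ⟶ X} {f : B ⟶ X} {z w : (pullback p f : TopCat.{u})}
    (h1 : pullback.fst p f z = pullback.fst p f w)
    (h2 : pullback.snd p f z = pullback.snd p f w) : z = w := by
  have hinj : Function.Injective (TopCat.pullbackIsoProdSubtype p f).hom :=
    (TopCat.homeoOfIso (TopCat.pullbackIsoProdSubtype p f)).injective
  apply hinj
  rw [TopCat.pullbackIsoProdSubtype_hom_apply, TopCat.pullbackIsoProdSubtype_hom_apply]
  exact Subtype.ext (Prod.ext h1 h2)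

lemma pb_exists {A B X : TopCat.{u}} (p : A ⟶ X) (f : B ⟶ X) (a : A) (b : B) (h : p a = f b) :
    ∃ z : (pullback p f : TopCat.{u}), pullback.fst p f z = a ∧ pullback.snd p f z = b :=
  ⟨(TopCat.pullbackIsoProdSubtype p f).inv ⟨(a, b), h⟩,
    TopCat.pullbackIsoProdSubtype_inv_fst_apply p f _,
    TopCat.pullbackIsoProdSubtype_inv_snd_apply p f _⟩

lemma pb_w {A B X : TopCat.{u}} (p : A ⟶ X) (f : B ⟶ X) (z : (pullback p f : TopCat.{u})) :
    p (pullback.fst p f z) = f (pullback.snd p f z) :=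
  ConcreteCategory.congr_hom (pullback.condition (f := p) (g := f)) z

/-- Boxes form neighbourhood bases in the pullback. -/
lemma pb_box {A B X : TopCat.{u}} (p : A ⟶ X) (f : B ⟶ X)
    {W : Set (pullback p f : TopCat.{u})} (hW : IsOpen W) {z} (hz : z ∈ W) :
    ∃ (O : Set A) (V : Set B), IsOpen O ∧ IsOpen V ∧ pullback.fst p f z ∈ O ∧
      pullback.snd p f z ∈ V ∧
      ∀ w, pullback.fst p f w ∈ O → pullback.snd p f w ∈ V → w ∈ W := by
  have hi : Topology.IsInducing
      (fun w : (pullback p f : TopCat.{u}) => (pullback.fst p f w, pullback.snd p f w)) := by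
    refine ⟨?_⟩
    have := TopCat.pullback_topology p f
    rw [instTopologicalSpaceProd, induced_inf, induced_compose, induced_compose]
    exact this
  obtain ⟨T, hT, rfl⟩ := hi.isOpen_iff.1 hW
  obtain ⟨O, V, hO, hV, h1, h2, h3⟩ := isOpen_prod_iff.1 hT _ _ hz
  exact ⟨O, V, hO, hV, h1, h2, fun w hw1 hw2 => h3 ⟨hw1, hw2⟩⟩

lemma fst_open {A B X : TopCat.{u}} (p : A ⟶ X) (f : B ⟶ X) (hf : IsOpenMap f) :
    IsOpenMap (pullback.fst p f) := by
  intro W hW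
  rw [isOpen_iff_forall_mem_open]
  rintro _ ⟨z, hz, rfl⟩
  obtain ⟨O, V, hO, hV, h1, h2, h3⟩ := pb_box p f hW hz
  refine ⟨O ∩ p ⁻¹' (f '' V), ?_, hO.inter ((hf V hV).preimage p.hom.continuous), h1, ?_⟩
  · rintro a ⟨ha, b, hb, hab⟩
    obtain ⟨w, rfl, rfl⟩ := pb_exists p f a b hab.symm
    exact ⟨w, h3 w ha hb, rfl⟩
  · exact ⟨_, h2, (pb_w p f z).symm⟩

lemma fst_surj {A B X : TopCat.{u}} (p : A ⟶ X) (f : B ⟶ X) (hf : Function.Surjective f) :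
    Function.Surjective (pullback.fst p f) := by
  intro a
  obtain ⟨b, hb⟩ := hf (p a)
  obtain ⟨z, hz, -⟩ := pb_exists p f a b hb.symm
  exact ⟨z, hz⟩

/-- The main topological step. -/
lemma core {Y X B Q : TopCat.{u}} (f : Y ⟶ X) (hopen : IsOpenMap f)
    (p : B ⟶ X) (r : Q ⟶ X) (q : B ⟶ Q) (hqr : q ≫ r = p) (hq : Topology.IsQuotientMap q)
    (e : pullback p f ⟶ pullback p f)
    (he1 : ∀ z, pullback.snd p f (e z) = pullback.snd p f z)
    (he2 : ∀ z, q (pullback.fst p f (e z)) = q (pullback.fst p f z))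
    (he3 : ∀ z z', pullback.snd p f z = pullback.snd p f z' →
      q (pullback.fst p f z) = q (pullback.fst p f z') → e z = e z')
    (m : pullback p f ⟶ pullback r f)
    (hm1 : ∀ z, pullback.fst r f (m z) = q (pullback.fst p f z))
    (hm2 : ∀ z, pullback.snd r f (m z) = pullback.snd p f z) :
    Topology.IsQuotientMap m := by
  have hrq : ∀ b, r (q b) = p b := fun b => ConcreteCategory.congr_hom hqr b
  have hsurj : Function.Surjective m := by
    intro w
    obtain ⟨b, hb⟩ := hq.surjective (pullback.fst r f w)
    obtain ⟨z, hz1, hz2⟩ := pb_exists p f b (pullback.snd r f w) (by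
      rw [← hrq, hb, pb_w])
    refine ⟨z, pb_ext ?_ ?_⟩
    · rw [hm1, hz1, hb]
    · rw [hm2, hz2]
  rw [Topology.isQuotientMap_iff]
  refine ⟨.of_isOpen_preimage_iff_isOpen fun T => ⟨fun hT => ?_, fun hT => hT.preimage m.hom.continuous⟩, hsurj⟩
  rw [isOpen_iff_forall_mem_open]
  intro w hw
  obtain ⟨z, rfl⟩ := hsurj w
  have hmm : ∀ z, m (e z) = m z := fun z => pb_ext
    (by rw [hm1, hm1, he2]) (by rw [hm2, hm2, he1])
  have hz0 : e z ∈ m ⁻¹' T := by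
    rw [Set.mem_preimage, hmm]; exact hw
  obtain ⟨O, V, hO, hV, h1, h2, h3⟩ := pb_box p f hT hz0
  set U' : Set (pullback p f : TopCat.{u}) := e ⁻¹' (pullback.fst p f ⁻¹' O) with hU'
  have hU'o : IsOpen U' := (hO.preimage (pullback.fst p f).hom.continuous).preimage e.hom.continuous
  set S : Set Q := q '' (pullback.fst p f '' U') with hS
  have hSo : IsOpen S := by
    rw [← hq.isOpen_preimage]
    have : q ⁻¹' S = pullback.fst p f '' U' := by
      refine Set.Subset.antisymm ?_ (Set.subset_preimage_image _ _)
      rintro b ⟨_, ⟨v, hv, rfl⟩, hvb⟩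
      obtain ⟨v', hv1, hv2⟩ := pb_exists p f b (pullback.snd p f v) (by
        rw [← hrq, ← hvb, hrq, pb_w])
      refine ⟨v', ?_, hv1⟩
      rw [hU', Set.mem_preimage, he3 v' v hv2 (by rw [hv1, hvb])]
      exact hv
    rw [this]
    exact fst_open p f hopen _ hU'o
  refine ⟨pullback.fst r f ⁻¹' S ∩ pullback.snd r f ⁻¹' V, ?_,
    (hSo.preimage (pullback.fst r f).hom.continuous).inter
      (hV.preimage (pullback.snd r f).hom.continuous), ?_, ?_⟩
  · rintro w ⟨⟨_, ⟨v, hv, rfl⟩, hvw⟩, hwV⟩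
    obtain ⟨v', hv1, hv2⟩ := pb_exists p f (pullback.fst p f (e v)) (pullback.snd r f w) (by
      rw [← hrq, he2, hvw, pb_w])
    have : m v' = w := pb_ext (by rw [hm1, hv1, he2, hvw]) (by rw [hm2, hv2])
    rw [← this]
    refine h3 v' ?_ ?_
    · rw [hv1]; exact hv
    · rw [hv2]; exact hwV
  · exact ⟨_, ⟨z, h1, rfl⟩, (hm1 z).symm⟩
  · rw [Set.mem_preimage, hm2, ← he1]; exact h2

/-- A bijective quotient map is an isomorphism in `TopCat`. -/
lemma isIso_of_quot {A B : TopCat.{u}} (k : A ⟶ B) (hq : Topology.IsQuotientMap k)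
    (hi : Function.Injective k) : IsIso k := by
  rw [TopCat.isIso_iff_isHomeomorph]
  refine ⟨k.hom.continuous, ?_, hi, hq.surjective⟩
  intro U hU
  rw [← hq.isOpen_preimage, Set.preimage_image_eq _ hi]
  exact hU

/-- Sets compatible with a parallel pair are saturated for its coequalizer. -/
lemma saturated {A B : TopCat.{u}} {a b : A ⟶ B} (c : Cofork a b) (hc : IsColimit c)
    (U : Set B) (hU : ∀ x, a x ∈ U ↔ b x ∈ U) {x y : B} (hxy : c.π x = c.π y) (hx : x ∈ U) :
    y ∈ U := by
  let I : TopCat.{u} := @TopCat.of (ULift.{u} Prop) ⊤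
  let g : B ⟶ I := @TopCat.ofHom _ _ _ ⊤ (@ContinuousMap.mk _ _ _ ⊤ (fun t => ⟨t ∈ U⟩) continuous_top)
  have hg : a ≫ g = b ≫ g := by
    ext t
    exact hU t
  have h2 : c.π ≫ Cofork.IsColimit.desc hc g hg = g := Cofork.IsColimit.π_desc' hc g hg
  have h3 : g x = g y := by
    rw [← h2, TopCat.comp_app, TopCat.comp_app, hxy]
  have h4 : (x ∈ U) = (y ∈ U) := congrArg ULift.down h3
  exact h4 ▸ hx

lemma map_fst {Y X : TopCat.{u}} (f : Y ⟶ X) {A B : Over X} (k : A ⟶ B)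
    (z : (pullback A.hom f : TopCat.{u})) :
    pullback.fst B.hom f (((Over.pullback f).map k).left z) = k.left (pullback.fst A.hom f z) := by
  have : ((Over.pullback f).map k).left ≫ pullback.fst B.hom f = pullback.fst A.hom f ≫ k.left := by
    exact pullback.lift_fst _ _ _
  exact ConcreteCategory.congr_hom this z

lemma over_snd {Y X : TopCat.{u}} (f : Y ⟶ X) {A B : Over X}
    (k : (Over.pullback f).obj A ⟶ (Over.pullback f).obj B)
    (z : (pullback A.hom f : TopCat.{u})) :
    pullback.snd B.hom f (k.left z) = pullback.snd A.hom f z :=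
  ConcreteCategory.congr_hom (Over.w k) z

lemma reflects {Y X : TopCat.{u}} (f : Y ⟶ X)
    (hsurj : Function.Surjective f) (hopen : IsOpenMap f) :
    (Over.pullback f).ReflectsIsomorphisms := by
  refine ⟨fun {A B} k hk => ?_⟩
  have h1 : IsIso ((Over.forget Y).map ((Over.pullback f).map k)) := inferInstance
  replace h1 : IsIso ((Over.pullback f).map k).left := h1
  rw [TopCat.isIso_iff_isHomeomorph] at h1
  have h2 : IsIso k.left := by
    apply isIso_of_quot
    · have hB : Topology.IsQuotientMap (pullback.fst B.hom f) :=
        (fst_open B.hom f hopen).isQuotientMap (pullback.fst B.hom f).hom.continuous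
          (fst_surj B.hom f hsurj)
      have hc := hB.comp h1.isQuotientMap
      have : (pullback.fst B.hom f : _ → _) ∘ ((Over.pullback f).map k).left
          = k.left ∘ pullback.fst A.hom f := funext fun z => map_fst f k z
      rw [this] at hc
      exact Topology.IsQuotientMap.of_comp (pullback.fst A.hom f).hom.continuous
        k.left.hom.continuous hc
    · intro x y hxy
      have hAx : ∀ x, B.hom (k.left x) = A.hom x := fun x => ConcreteCategory.congr_hom (Over.w k) x
      obtain ⟨t, ht⟩ := hsurj (A.hom x)
      obtain ⟨z, hz1, hz2⟩ := pb_exists A.hom f x t ht.symm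
      obtain ⟨w, hw1, hw2⟩ := pb_exists A.hom f y t (by rw [ht, ← hAx, ← hAx, hxy])
      have : z = w := h1.injective (pb_ext (p := B.hom) (f := f)
        (by rw [map_fst, map_fst, hz1, hw1, hxy]) (by rw [over_snd, over_snd, hz2, hw2]))
      rw [← hz1, ← hw1, this]
  exact (have : IsIso ((Over.forget _).map k) := by assumption
    isIso_of_reflects_iso k (Over.forget _))

lemma preserves {Y X : TopCat.{u}} (f : Y ⟶ X) (hopen : IsOpenMap f)
    {A B : Over X} (a b : A ⟶ B) [(Over.pullback f).IsSplitPair a b] :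
    PreservesColimit (parallelPair a b) (Over.pullback f) := by
  obtain ⟨Z, π, ⟨t⟩⟩ := HasSplitCoequalizer.splittable
    (f := (Over.pullback f).map a) (g := (Over.pullback f).map b)
  have w := coequalizer.condition a b
  have hc0 := coequalizerIsCoequalizer a b
  let q := coequalizer.π a b
  have hc := isColimitCoforkMapOfIsColimit (Over.forget X) w hc0
  have hq : Topology.IsQuotientMap q.left := TopCat.isQuotientMap_of_isColimit_cofork _ hc
  have w' : (Over.pullback f).map a ≫ (Over.pullback f).map q =
      (Over.pullback f).map b ≫ (Over.pullback f).map q := by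
    rw [← Functor.map_comp, ← Functor.map_comp, w]
  -- the key fibrewise statement
  have key : ∀ z z' : (pullback B.hom f : TopCat.{u}),
      pullback.snd B.hom f z = pullback.snd B.hom f z' →
      q.left (pullback.fst B.hom f z) = q.left (pullback.fst B.hom f z') →
      π.left z = π.left z' := by
    intro z z' h1 h2
    have hcond : ∀ v : (pullback A.hom f : TopCat.{u}),
        π.left (((Over.pullback f).map a).left v) = π.left (((Over.pullback f).map b).left v) :=
      fun v => ConcreteCategory.congr_hom (congrArg CommaMorphism.left t.condition) v
    have haX : ∀ x, B.hom (a.left x) = A.hom x := fun x => ConcreteCategory.congr_hom (Over.w a) x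
    have hbX : ∀ x, B.hom (b.left x) = A.hom x := fun x => ConcreteCategory.congr_hom (Over.w b) x
    let U : Set (B.left : TopCat.{u}) := {x | ∃ v : (pullback B.hom f : TopCat.{u}),
      pullback.fst B.hom f v = x ∧ pullback.snd B.hom f v = pullback.snd B.hom f z ∧
      π.left v = π.left z}
    have hU : ∀ x, a.left x ∈ U ↔ b.left x ∈ U := by
      intro x
      constructor
      · rintro ⟨v, hv1, hv2, hv3⟩
        obtain ⟨v', hv'1, hv'2⟩ := pb_exists A.hom f x (pullback.snd B.hom f v) (by
          rw [← pb_w, hv1, haX])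
        have hv : ((Over.pullback f).map a).left v' = v := pb_ext (p := B.hom) (f := f)
          (by rw [map_fst, hv'1, hv1]) (by rw [over_snd, hv'2])
        refine ⟨((Over.pullback f).map b).left v', ?_, ?_, ?_⟩
        · rw [map_fst, hv'1]
        · rw [over_snd, hv'2, hv2]
        · rw [← hcond, hv, hv3]
      · rintro ⟨v, hv1, hv2, hv3⟩
        obtain ⟨v', hv'1, hv'2⟩ := pb_exists A.hom f x (pullback.snd B.hom f v) (by
          rw [← pb_w, hv1, hbX])
        have hv : ((Over.pullback f).map b).left v' = v := pb_ext (p := B.hom) (f := f)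
          (by rw [map_fst, hv'1, hv1]) (by rw [over_snd, hv'2])
        refine ⟨((Over.pullback f).map a).left v', ?_, ?_, ?_⟩
        · rw [map_fst, hv'1]
        · rw [over_snd, hv'2, hv2]
        · rw [hcond, hv, hv3]
    obtain ⟨v, hv1, hv2, hv3⟩ := saturated _ hc U hU h2 ⟨z, rfl, rfl, rfl⟩
    have : v = z' := pb_ext hv1 (hv2.trans h1)
    rw [← hv3, this]
  -- the idempotent
  let e := π ≫ t.rightSection
  have heq : e ≫ (Over.pullback f).map q = (Over.pullback f).map q := by
    change (π ≫ t.rightSection) ≫ _ = _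
    rw [← t.leftSection_top, Category.assoc, w', ← Category.assoc, t.leftSection_bottom,
      Category.id_comp]
  have hquot : Topology.IsQuotientMap ((Over.pullback f).map q).left := by
    refine core f hopen B.hom (coequalizer a b).hom q.left (Over.w q) hq e.left
      (over_snd f e) ?_ ?_ _ (map_fst f q) (over_snd f _)
    · intro z
      rw [← map_fst, ← map_fst]
      have := ConcreteCategory.congr_hom (congrArg CommaMorphism.left heq) z
      exact congrArg _ this
    · intro z z' h1 h2
      exact congrArg t.rightSection.left (key z z' h1 h2)
  -- the comparison map
  let k := t.rightSection ≫ (Over.pullback f).map q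
  have hk : π ≫ k = (Over.pullback f).map q := by
    change π ≫ t.rightSection ≫ _ = _
    rw [← Category.assoc]; exact heq
  have hkl : ∀ z, k.left (π.left z) = ((Over.pullback f).map q).left z := fun z =>
    ConcreteCategory.congr_hom (congrArg CommaMorphism.left hk) z
  have hsec : ∀ z, π.left (t.rightSection.left z) = z := fun z =>
    ConcreteCategory.congr_hom (congrArg CommaMorphism.left t.rightSection_π) z
  have hkiso : IsIso k.left := by
    apply isIso_of_quot
    · have hc : Topology.IsQuotientMap (k.left ∘ π.left) := by
        have : (k.left : _ → _) ∘ π.left = ((Over.pullback f).map q).left := funext hkl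
        rw [this]; exact hquot
      exact Topology.IsQuotientMap.of_comp π.left.hom.continuous k.left.hom.continuous hc
    · intro x y hxy
      rw [← hsec x, ← hsec y, hkl, hkl] at hxy
      rw [← hsec x, ← hsec y]
      refine key _ _ ?_ ?_
      · rw [← over_snd f ((Over.pullback f).map q), hxy, over_snd]
      · rw [← map_fst, hxy, map_fst]
  have hkiso' : IsIso k := (have : IsIso ((Over.forget _).map k) := by assumption
    isIso_of_reflects_iso k (Over.forget _))
  refine preservesColimit_of_preserves_colimit_cocone hc0 ?_
  refine (isColimitMapCoconeCoforkEquiv (Over.pullback f) w).symm ?_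
  refine IsColimit.ofIsoColimit t.isCoequalizer (Cofork.ext (@asIso _ _ _ _ k hkiso') ?_)
  exact hk

end OpenSurjDescent

/-- Open surjections of topological spaces are effective descent morphisms:
the pullback functor `Over X ⥤ Over Y` is monadic. -/
theorem openSurjection_effectiveDescent
    {Y X : TopCat} (f : Y ⟶ X)
    (hsurj : Function.Surjective f) (hopen : IsOpenMap f) :
    Nonempty (MonadicRightAdjoint (Over.pullback f)) := by
  have := OpenSurjDescent.reflects f hsurj hopen
  have : Monad.HasCoequalizerOfIsSplitPair (Over.pullback f) := ⟨fun _ _ => inferInstance⟩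
  have : Monad.PreservesColimitOfIsSplitPair (Over.pullback f) :=
    ⟨fun a b => OpenSurjDescent.preserves f hopen a b⟩
  exact ⟨Monad.monadicOfHasPreservesGSplitCoequalizersOfReflectsIsomorphisms
    (Over.mapPullbackAdj f)⟩
end
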